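/- Let P = c_P z₁^{α₁}z₂^{α₂}z₃^{α₃}, Q = c_Q z₁^{β₁}z₂^{β₂}z₃^{β₃}, R = c_R z₁^{γ₁}z₂^{γ₂}z₃^{γ₃} be monomials with nonzero coefficients c_P, c_Q, c_R ∈ ℂ, with deg P + deg Q = 2·deg R, deg R ≥ 2, and det[[α₁,β₁,γ₁],[α₂,β₂,γ₂],[α₃,β₃,γ₃]] ≠ 0 (holomorphic nondegeneracy); set d = deg P + deg Q. Then dim_ℝ g₁ = 1. -/

import Mathlib

open MvPolynomial Complex

noncomputable section

/-- `Φ(z) = P(z)·conj(Q(z)) + Q(z)·conj(P(z)) + R(z)·conj(R(z))`, so that the model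
hypersurface is `M = {(z,w) : Im w = Φ(z)}`. -/
def Phi (P Q R : MvPolynomial (Fin 3) ℂ) (z : Fin 3 → ℂ) : ℂ :=
  eval z P * (starRingEnd ℂ) (eval z Q) + eval z Q * (starRingEnd ℂ) (eval z P) +
    eval z R * (starRingEnd ℂ) (eval z R)

/-- `Φ_j(z) = (∂P/∂z_j)(z)·conj(Q(z)) + (∂Q/∂z_j)(z)·conj(P(z)) + (∂R/∂z_j)(z)·conj(R(z))`. -/
def PhiD (P Q R : MvPolynomial (Fin 3) ℂ) (j : Fin 3) (z : Fin 3 → ℂ) : ℂ :=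
  eval z (pderiv j P) * (starRingEnd ℂ) (eval z Q) +
    eval z (pderiv j Q) * (starRingEnd ℂ) (eval z P) +
    eval z (pderiv j R) * (starRingEnd ℂ) (eval z R)

/-- The monomial `c·z₁^{e₁} z₂^{e₂} z₃^{e₃}`. -/
def mon (c : ℂ) (e : Fin 3 → ℕ) : MvPolynomial (Fin 3) ℂ :=
  C c * X 0 ^ e 0 * X 1 ^ e 1 * X 2 ^ e 2

/-- Total degree of the exponent vector `e`. -/
def degE (e : Fin 3 → ℕ) : ℕ := e 0 + e 1 + e 2

/-- The determinant of the 3×3 matrix whose columns are the exponent vectors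
`a`, `b`, `g` of the three monomials. -/
def edet (a b g : Fin 3 → ℕ) : ℤ :=
  Matrix.det !![(a 0 : ℤ), (b 0 : ℤ), (g 0 : ℤ);
                (a 1 : ℤ), (b 1 : ℤ), (g 1 : ℤ);
                (a 2 : ℤ), (b 2 : ℤ), (g 2 : ℤ)]

/-- The polynomial vector field `Σ F_j ∂/∂z_j + G ∂/∂w` is an infinitesimal CR
automorphism of `M = {Im w = Φ(z)}`. -/
def IsInfCR (P Q R : MvPolynomial (Fin 3) ℂ)
    (F : Fin 3 → MvPolynomial (Fin 4) ℂ) (G : MvPolynomial (Fin 4) ℂ) : Prop :=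
  ∀ (z : Fin 3 → ℂ) (u : ℝ),
    (eval (Fin.snoc z ((u : ℂ) + Complex.I * Phi P Q R z)) G / (2 * Complex.I) -
      ∑ j, eval (Fin.snoc z ((u : ℂ) + Complex.I * Phi P Q R z)) (F j) * PhiD P Q R j z).re = 0

/-- The graded component `g_μ`: infinitesimal CR automorphisms of `M` all of whose
monomial terms have weight `μ` (each `z_j` having weight `1/d` and `w` weight `1`). -/
def gw (P Q R : MvPolynomial (Fin 3) ℂ) (d : ℕ) (μ : ℚ) :
    Set ((Fin 3 → MvPolynomial (Fin 4) ℂ) × MvPolynomial (Fin 4) ℂ) :=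
  {Xf | IsInfCR P Q R Xf.1 Xf.2 ∧
    (∀ j, ∀ m ∈ (Xf.1 j).support,
      ((m 0 : ℚ) + (m 1 : ℚ) + (m 2 : ℚ)) / (d : ℚ) + (m 3 : ℚ) - 1 / (d : ℚ) = μ) ∧
    ∀ m ∈ Xf.2.support,
      ((m 0 : ℚ) + (m 1 : ℚ) + (m 2 : ℚ)) / (d : ℚ) + (m 3 : ℚ) - 1 = μ}

/-!
Replacing `conj (z, w)` by independent variables `(ζ, ω)` turns the tangency condition into an
identity on the complexified hypersurface `w - ω = 2iΦ(z, ζ)`. At `ζ = 0`, `ω = w` a field of weight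
one is left with only its `∂/∂w`-component, which is therefore `c w²` with `c` real. Since the
exponent matrix is invertible, `t` can be chosen so that `∑ t_j z_j ∂/∂z_j` fixes the three
monomials; then `w ∑ t_j z_j ∂/∂z_j + w² ∂/∂w` is tangent, and subtracting `c` times it leaves a
field without `∂/∂w`-component. For such a field, comparing coefficients in `ζ` at `ω = 0` shows
that it annihilates the three monomials: no product of two of them is proportional to a third one,
which separates the terms, and the degrees exclude what remains. By nondegeneracy it is zero.
-/

open scoped ComplexConjugate

section Exponents

variable {τ : Type*} {R : Type*}

/-- The matrix whose rows are the given exponent vectors. -/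
def exponentMatrix (R : Type*) [NatCast R] (e : τ → τ →₀ ℕ) : Matrix τ τ R :=
  Matrix.of fun i j => (e i j : R)

lemma sum_mul_X_mul_pderiv_monomial [Fintype τ] [CommSemiring R] (t : τ → R) (s : τ →₀ ℕ) (r : R) :
    ∑ j, C (t j) * X j * pderiv j (monomial s r) = C (∑ j, s j * t j) * monomial s r := by
  rw [map_sum, Finset.sum_mul]
  refine Finset.sum_congr rfl fun j _ => ?_
  rw [mul_assoc, X_mul_pderiv_monomial, nsmul_eq_mul, map_mul, map_natCast]
  ring

lemma isHomogeneous_sum_mul_pderiv_monomial [Fintype τ] [CommSemiring R] {k : ℕ}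
    {f : τ → MvPolynomial τ R} (hf : ∀ j, (f j).IsHomogeneous (k + 1)) {s : τ →₀ ℕ} (hs : s ≠ 0)
    (r : R) :
    (∑ j, f j * pderiv j (monomial s r)).IsHomogeneous (k + s.degree) := by
  refine IsHomogeneous.sum _ _ _ fun j _ => ?_
  have hpos : s.degree ≠ 0 := (Finsupp.degree_eq_zero_iff s).not.mpr hs
  have h := (hf j).mul ((isHomogeneous_monomial (d := s) r rfl).pderiv (i := j))
  rwa [show k + 1 + (s.degree - 1) = k + s.degree by omega] at h

variable [Fintype τ] [DecidableEq τ] {e : τ → τ →₀ ℕ}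

lemma exponents_injective [CommRing R] [IsDomain R] (hdet : (exponentMatrix R e).det ≠ 0) :
    Function.Injective e := fun _ _ hij =>
  (Matrix.linearIndependent_rows_of_det_ne_zero hdet).injective <|
    funext fun k => congrArg (fun s : τ →₀ ℕ => (s k : R)) hij

lemma exists_sum_exponents_mul_eq_one [Field R] (hdet : (exponentMatrix R e).det ≠ 0) :
    ∃ t : τ → R, ∀ i, ∑ j, e i j * t j = 1 := by
  have hunit : IsUnit (exponentMatrix R e) :=
    (Matrix.isUnit_iff_isUnit_det _).mpr (isUnit_iff_ne_zero.mpr hdet)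
  obtain ⟨t, ht⟩ := Matrix.mulVec_surjective_iff_isUnit.mpr hunit 1
  exact ⟨t, congrFun ht⟩

lemma exponents_ne_zero [Field R] (hdet : (exponentMatrix R e).det ≠ 0) (i : τ) : e i ≠ 0 := by
  obtain ⟨t, ht⟩ := exists_sum_exponents_mul_eq_one hdet
  intro h
  simpa [h] using ht i

lemma exponents_add_ne [Field R] (hdet : (exponentMatrix R e).det ≠ 0) (i j k : τ) :
    e i + e j ≠ e k := by
  obtain ⟨t, ht⟩ := exists_sum_exponents_mul_eq_one hdet
  intro h
  have hk := ht k
  simp [← h, add_mul, Finset.sum_add_distrib, ht] at hk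

-- Multiplying by `∏ X_k` turns each `∂/∂X_j` into an Euler operator `X_j ∂/∂X_j`, so that
-- the exponent matrix becomes the matrix of the system.
lemma eq_zero_of_forall_sum_mul_pderiv_monomial [CommRing R] [IsDomain R] {κ : τ → R}
    (hκ : ∀ i, κ i ≠ 0) (hdet : (exponentMatrix R e).det ≠ 0) {v : τ → MvPolynomial τ R}
    (hv : ∀ i, ∑ j, v j * pderiv j (monomial (e i) (κ i)) = 0) : v = 0 := by
  have hdetC : (exponentMatrix (MvPolynomial τ R) e).det ≠ 0 := by
    have hmap : exponentMatrix (MvPolynomial τ R) e =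
        (C (σ := τ)).mapMatrix (exponentMatrix R e) := by
      ext1 i j
      simp [exponentMatrix]
    rwa [hmap, ← RingHom.map_det, Ne, C_eq_zero]
  have hprod := Matrix.eq_zero_of_mulVec_eq_zero hdetC
    (v := fun j => v j * ∏ k ∈ Finset.univ.erase j, X k) <| funext fun i => by
      refine (mul_eq_zero.mp (?_ : _ * monomial (e i) (κ i) = 0)).resolve_right (by simp [hκ])
      calc (∑ j, (e i j : MvPolynomial τ R) * (v j * ∏ k ∈ Finset.univ.erase j, X k)) *
            monomial (e i) (κ i)
          = ∑ j, v j * (∏ k ∈ Finset.univ.erase j, X k) *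
              (X j * pderiv j (monomial (e i) (κ i))) := by
            rw [Finset.sum_mul]
            refine Finset.sum_congr rfl fun j _ => ?_
            rw [X_mul_pderiv_monomial, nsmul_eq_mul]
            ring
        _ = (∏ k, X k) * ∑ j, v j * pderiv j (monomial (e i) (κ i)) := by
            rw [Finset.mul_sum]
            refine Finset.sum_congr rfl fun j _ => ?_
            rw [← Finset.mul_prod_erase _ _ (Finset.mem_univ j)]
            ring
        _ = 0 := by rw [hv, mul_zero]
  refine funext fun j => (mul_eq_zero.mp (congrFun hprod j)).resolve_right ?_
  exact Finset.prod_ne_zero_iff.mpr fun k _ => X_ne_zero k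

end Exponents

section CoefficientComparison

variable {ι τ R : Type*} [Fintype ι] [CommSemiring R] {e : ι → τ →₀ ℕ}

lemma coeff_sum_monomial (he : Function.Injective e) (x : ι → R) (j : ι) :
    coeff (e j) (∑ i, monomial (e i) (x i)) = x j := by
  classical
  simp [coeff_sum, coeff_monomial, he.eq_iff]

lemma coeff_sum_monomial_mul_sum_monomial (he : ∀ i j k, e i + e j ≠ e k) (x y : ι → R) (k : ι) :
    coeff (e k) ((∑ i, monomial (e i) (x i)) * ∑ i, monomial (e i) (y i)) = 0 := by
  classical
  simp [Finset.sum_mul_sum, coeff_sum, coeff_monomial, monomial_mul, he]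

end CoefficientComparison

section Weights

variable {R : Type*} [CommSemiring R] {n d N : ℕ}

/-- The weights of `(z, w)`, multiplied by `d`: each `z_j` has weight `1` and `w` has weight `d`. -/
def weights (n d : ℕ) : Fin (n + 1) → ℕ := Fin.snoc (fun _ => 1) d

lemma weight_weights (s : Fin (n + 1) →₀ ℕ) :
    Finsupp.weight (weights n d) s = ∑ i, s (Fin.castSucc i) + s (Fin.last n) * d := by
  simp [Finsupp.weight_eq_sum, Fin.sum_univ_castSucc, weights]

lemma monomial_eq_X_last_pow_mul_rename (s : Fin (n + 1) →₀ ℕ) (r : R) :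
    monomial s r = X (Fin.last n) ^ s (Fin.last n) *
      rename Fin.castSucc (monomial (Finsupp.equivFunOnFinite.symm fun i => s i.castSucc) r) := by
  rw [rename_monomial, X_pow_eq_monomial, monomial_mul, one_mul]
  congr 2
  ext i
  induction i using Fin.lastCases with
  | last => simp [Finsupp.mapDomain_of_notMem_range]
  | cast i => simp [Finsupp.mapDomain_apply (Fin.castSucc_injective n)]

theorem exists_eq_sum_X_last_pow_mul_rename (hd : 0 < d)
    {p : MvPolynomial (Fin (n + 1)) R} (hp : IsWeightedHomogeneous (weights n d) p N) :
    ∃ q : ℕ → MvPolynomial (Fin n) R, (∀ k, (q k).IsHomogeneous (N - k * d)) ∧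
      p = ∑ k ∈ Finset.range (N / d + 1), X (Fin.last n) ^ k * rename Fin.castSucc (q k) := by
  induction hp using IsWeightedHomogeneous.induction_on with
  | zero => exact ⟨0, fun _ => isHomogeneous_zero _ _ _, by simp⟩
  | add p₁ p₂ _ _ h₁ h₂ =>
    obtain ⟨q₁, hq₁, rfl⟩ := h₁
    obtain ⟨q₂, hq₂, rfl⟩ := h₂
    exact ⟨q₁ + q₂, fun k => (hq₁ k).add (hq₂ k), by simp [mul_add, Finset.sum_add_distrib]⟩
  | monomial s r hs =>
    rw [weight_weights] at hs
    refine ⟨Pi.single (s (Fin.last n))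
      (monomial (Finsupp.equivFunOnFinite.symm fun i => s i.castSucc) r), fun k => ?_, ?_⟩
    · obtain rfl | hk := eq_or_ne k (s (Fin.last n))
      · rw [Pi.single_eq_same]
        refine isHomogeneous_monomial _ ?_
        simp [Finsupp.degree_eq_sum, ← hs]
      · rw [Pi.single_eq_of_ne hk]
        exact isHomogeneous_zero _ _ _
    · have hlast : s (Fin.last n) < N / d + 1 := by
        rw [Nat.lt_succ_iff, Nat.le_div_iff_mul_le hd]
        omega
      rw [Finset.sum_eq_single_of_mem _ (Finset.mem_range.mpr hlast) fun k _ hk => by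
        rw [Pi.single_eq_of_ne hk, map_zero, mul_zero], Pi.single_eq_same]
      exact monomial_eq_X_last_pow_mul_rename s r

lemma isWeightedHomogeneous_map {S τ M : Type*} [CommSemiring S] [AddCommMonoid M] {wt : τ → M}
    {N : M} {p : MvPolynomial τ R} (hp : IsWeightedHomogeneous wt p N) (f : R →+* S) :
    IsWeightedHomogeneous wt (map f p) N :=
  fun s hs => hp fun h => hs (by rw [coeff_map, h, map_zero])

lemma eval_zero_of_isHomogeneous {τ : Type*} {p : MvPolynomial τ R}
    (hp : p.IsHomogeneous N) (hN : N ≠ 0) : eval 0 p = 0 := by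
  rw [eval_zero, constantCoeff_eq]
  exact hp.coeff_eq_zero (by simpa using hN.symm)

lemma eval_snoc_rename (z : Fin n → R) (w : R) (p : MvPolynomial (Fin n) R) :
    eval (Fin.snoc z w) (rename Fin.castSucc p) = eval z p := by
  rw [eval_rename]
  congr 2
  ext i
  simp

lemma eval_snoc_zero_eq_zero (hd : 0 < d) (hN : ¬d ∣ N) {p : MvPolynomial (Fin (n + 1)) R}
    (hp : IsWeightedHomogeneous (weights n d) p N) (w : R) :
    eval (Fin.snoc 0 w) p = 0 := by
  obtain ⟨q, hq, rfl⟩ := exists_eq_sum_X_last_pow_mul_rename hd hp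
  rw [map_sum]
  refine Finset.sum_eq_zero fun k hk => ?_
  have hk : k * d ≤ N := (Nat.le_div_iff_mul_le hd).mp (Finset.mem_range_succ_iff.mp hk)
  have hne : N - k * d ≠ 0 := fun h => hN ⟨k, by rw [mul_comm]; omega⟩
  rw [map_mul, eval_snoc_rename, eval_zero_of_isHomogeneous (hq k) hne, mul_zero]

lemma exists_eval_snoc_zero_eq_mul_pow (hd : 0 < d) {k : ℕ} {p : MvPolynomial (Fin (n + 1)) R}
    (hp : IsWeightedHomogeneous (weights n d) p (k * d)) :
    ∃ c : R, ∀ w, eval (Fin.snoc 0 w) p = c * w ^ k := by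
  obtain ⟨q, hq, rfl⟩ := exists_eq_sum_X_last_pow_mul_rename hd hp
  refine ⟨eval 0 (q k), fun w => ?_⟩
  rw [map_sum, Finset.sum_eq_single k]
  · simp only [map_mul, map_pow, eval_snoc_rename, eval_X, Fin.snoc_last, mul_comm]
  · intro l hl hlk
    have hl : l ≤ k := by simpa [hd.ne'] using Finset.mem_range_succ_iff.mp hl
    have hne : k * d - l * d ≠ 0 := by
      rw [← Nat.sub_mul]
      exact mul_ne_zero (by omega) hd.ne'
    rw [map_mul, eval_snoc_rename, eval_zero_of_isHomogeneous (hq l) hne, mul_zero]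
  · simp [hd.ne']

lemma exists_eq_rename_add_X_last_mul (hd : 2 ≤ d) {p : MvPolynomial (Fin (n + 1)) R}
    (hp : IsWeightedHomogeneous (weights n d) p (d + 1)) :
    ∃ f l : MvPolynomial (Fin n) R, f.IsHomogeneous (d + 1) ∧
      p = rename Fin.castSucc f + X (Fin.last n) * rename Fin.castSucc l := by
  obtain ⟨q, hq, rfl⟩ := exists_eq_sum_X_last_pow_mul_rename (by omega) hp
  have hdiv : (d + 1) / d = 1 := by rw [Nat.div_eq_iff (by omega)]; omega
  exact ⟨q 0, q 1, by simpa using hq 0, by simp [hdiv, Finset.sum_range_succ]⟩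

end Weights

section Polarization

variable {τ : Type*}

lemma eval_map_conj (p : MvPolynomial τ ℂ) (x : τ → ℂ) :
    eval (fun i => conj (x i)) (map conj p) = conj (eval x p) := by
  rw [eval_map, eval₂_comp]
  rfl

lemma eval_bind₁ {ι R : Type*} [CommSemiring R] (s : ι → MvPolynomial τ R) (x : τ → R)
    (p : MvPolynomial ι R) : eval x (bind₁ s p) = eval (fun i => eval x (s i)) p :=
  eval₂Hom_bind₁ (RingHom.id R) x s p

-- In the coordinates `z = x + iy`, `ζ = x - iy` the subspace `ζ = conj z` becomes the real points,
-- on which a nonzero polynomial cannot vanish.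
lemma eq_zero_of_forall_eval_conj [Finite τ] {T : MvPolynomial (τ ⊕ τ) ℂ}
    (hT : ∀ z : τ → ℂ, eval (Sum.elim z fun i => conj (z i)) T = 0) : T = 0 := by
  set s : τ ⊕ τ → MvPolynomial (τ ⊕ τ) ℂ :=
    Sum.elim (fun i => X (.inl i) + C I * X (.inr i)) (fun i => X (.inl i) - C I * X (.inr i))
    with hs
  have hreal : bind₁ s T = 0 := by
    refine funext_set (fun _ => Set.range ((↑) : ℝ → ℂ))
      (fun _ => Set.infinite_range_of_injective ofReal_injective) fun x hx => ?_
    choose y hy using fun i => hx i (Set.mem_univ i)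
    rw [map_zero, eval_bind₁, ← hT fun i => y (.inl i) + I * y (.inr i)]
    congr 2
    ext i
    rcases i with i | i <;> simp [hs, ← hy, sub_eq_add_neg]
  refine MvPolynomial.funext fun x => ?_
  have hx := congrArg (eval (Sum.elim (fun i => (x (.inl i) + x (.inr i)) / 2)
    (fun i => (x (.inl i) - x (.inr i)) / (2 * I)))) hreal
  rw [eval_bind₁, map_zero] at hx
  rw [map_zero, ← hx]
  congr 2
  ext i
  rcases i with i | i <;> simp [hs] <;> field_simp <;> ring

variable {n : ℕ}

lemma conj_comp_snoc (z : Fin n → ℂ) (w : ℂ) :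
    (fun i => conj ((Fin.snoc z w : Fin (n + 1) → ℂ) i)) =
      Fin.snoc (fun i => conj (z i)) (conj w) := by
  refine funext fun i => ?_
  induction i using Fin.lastCases <;> simp

/-- The point with coordinates `(z, w)` and `(ζ, ω)` of `ℂⁿ⁺¹ × ℂⁿ⁺¹`, where `(ζ, ω)` plays the role
of the conjugate of `(z, w)`. -/
abbrev polarPoint (z : Fin n → ℂ) (w : ℂ) (ζ : Fin n → ℂ) (ω : ℂ) :
    Fin (n + 1) ⊕ Fin (n + 1) → ℂ :=
  Sum.elim (Fin.snoc z w) (Fin.snoc ζ ω)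

/-- The substitution `w = s + s' + iΨ(z, ζ)`, `ω = s + s' - iΨ(z, ζ)`, which parametrizes the
complexified hypersurface `w - ω = 2iΨ(z, ζ)` by `(z, s)` and `(ζ, s')`. When `(ζ, s')` is the
conjugate of `(z, s)`, the sum `s + s'` is an arbitrary real number. -/
def hypersurfaceParam (Ψ : MvPolynomial (Fin n ⊕ Fin n) ℂ) :
    Fin (n + 1) ⊕ Fin (n + 1) → MvPolynomial (Fin (n + 1) ⊕ Fin (n + 1)) ℂ :=
  let u := X (.inl (Fin.last n)) + X (.inr (Fin.last n))
  let Φ := rename (Sum.map Fin.castSucc Fin.castSucc) Ψ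
  Sum.elim (Fin.snoc (fun i => X (.inl i.castSucc)) (u + C I * Φ))
    (Fin.snoc (fun i => X (.inr i.castSucc)) (u - C I * Φ))

lemma eval_bind₁_hypersurfaceParam (Ψ : MvPolynomial (Fin n ⊕ Fin n) ℂ)
    (H : MvPolynomial (Fin (n + 1) ⊕ Fin (n + 1)) ℂ) (z ζ : Fin n → ℂ) (s s' : ℂ) :
    eval (polarPoint z s ζ s') (bind₁ (hypersurfaceParam Ψ) H) =
      eval (polarPoint z (s + s' + I * eval (Sum.elim z ζ) Ψ)
        ζ (s + s' - I * eval (Sum.elim z ζ) Ψ)) H := by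
  have hΨ : eval (polarPoint z s ζ s') (rename (Sum.map Fin.castSucc Fin.castSucc) Ψ) =
      eval (Sum.elim z ζ) Ψ := by
    rw [eval_rename]
    congr 2
    ext (i | i) <;> simp
  rw [eval_bind₁]
  congr 2
  ext (i | i) <;> induction i using Fin.lastCases <;> simp [hypersurfaceParam, hΨ]

theorem eval_eq_zero_of_forall_hypersurface {Ψ : MvPolynomial (Fin n ⊕ Fin n) ℂ}
    {H : MvPolynomial (Fin (n + 1) ⊕ Fin (n + 1)) ℂ}
    (hH : ∀ (z : Fin n → ℂ) (u : ℝ),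
      eval (polarPoint z (u + I * eval (Sum.elim z fun i => conj (z i)) Ψ) (fun i => conj (z i))
        (u - I * eval (Sum.elim z fun i => conj (z i)) Ψ)) H = 0)
    {z ζ : Fin n → ℂ} {w ω : ℂ} (hw : w - ω = 2 * I * eval (Sum.elim z ζ) Ψ) :
    eval (polarPoint z w ζ ω) H = 0 := by
  have hparam := eq_zero_of_forall_eval_conj (T := bind₁ (hypersurfaceParam Ψ) H) fun x => by
    obtain ⟨z, s, rfl⟩ : ∃ z s, x = Fin.snoc z s := ⟨_, _, (Fin.snoc_init_self x).symm⟩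
    rw [conj_comp_snoc, eval_bind₁_hypersurfaceParam, add_conj]
    exact hH z (2 * s.re)
  have hpoint := eval_bind₁_hypersurfaceParam Ψ H z ζ ((w + ω) / 2) 0
  have hw₁ : (w + ω) / 2 + 0 + I * eval (Sum.elim z ζ) Ψ = w := by linear_combination -hw / 2
  have hw₂ : (w + ω) / 2 + 0 - I * eval (Sum.elim z ζ) Ψ = ω := by linear_combination hw / 2
  rwa [hparam, map_zero, hw₁, hw₂, eq_comm] at hpoint

end Polarization

section FieldDerivative

variable {R : Type*} [CommSemiring R] {n : ℕ}

/-- The derivative `∑ F_j ∂p/∂z_j` of `p` along a vector field with coefficients in `(z, w)`. -/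
def fieldDeriv (F : Fin n → MvPolynomial (Fin (n + 1)) R)
    (p : MvPolynomial (Fin n) R) : MvPolynomial (Fin (n + 1)) R :=
  ∑ j, F j * rename Fin.castSucc (pderiv j p)

lemma eval_snoc_fieldDeriv (F : Fin n → MvPolynomial (Fin (n + 1)) R) (p : MvPolynomial (Fin n) R)
    (z : Fin n → R) (w : R) :
    eval (Fin.snoc z w) (fieldDeriv F p) =
      ∑ j, eval (Fin.snoc z w) (F j) * eval z (pderiv j p) := by
  simp only [fieldDeriv, map_sum, map_mul, eval_snoc_rename]

lemma fieldDeriv_rename_add (f l : Fin n → MvPolynomial (Fin n) R) (p : MvPolynomial (Fin n) R) :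
    fieldDeriv (fun j => rename Fin.castSucc (f j) + X (Fin.last n) * rename Fin.castSucc (l j)) p =
      rename Fin.castSucc (∑ j, f j * pderiv j p) +
        X (Fin.last n) * rename Fin.castSucc (∑ j, l j * pderiv j p) := by
  simp only [fieldDeriv, add_mul, Finset.sum_add_distrib, map_sum, map_mul, Finset.mul_sum,
    mul_assoc]

end FieldDerivative

section Tangency

variable {n : ℕ} {ι : Type*} [Fintype ι]

/-- The polarization `Φ(z, ζ) = ∑ mᵢ(z) m̄_{σ i}(ζ)` of the defining function. For `M`
one takes `m = (P, Q, R)` and `σ` the transposition of `P` and `Q`. -/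
def polarization {τ : Type*} (σ : Equiv.Perm ι) (m : ι → MvPolynomial τ ℂ) :
    MvPolynomial (τ ⊕ τ) ℂ :=
  ∑ i, rename .inl (m i) * rename .inr (map conj (m (σ i)))

/-- The polarized tangency expression
`G(z, w) - Ḡ(ζ, ω) - 2i ∑ ((F mᵢ)(z, w) m̄_{σ i}(ζ) + (F̄ m̄ᵢ)(ζ, ω) m_{σ i}(z))`. -/
def tangencyDefect (σ : Equiv.Perm ι) (m : ι → MvPolynomial (Fin n) ℂ)
    (Y : (Fin n → MvPolynomial (Fin (n + 1)) ℂ) × MvPolynomial (Fin (n + 1)) ℂ) :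
    MvPolynomial (Fin (n + 1) ⊕ Fin (n + 1)) ℂ :=
  rename .inl Y.2 - rename .inr (map conj Y.2) - C (2 * I) * ∑ i,
    (rename .inl (fieldDeriv Y.1 (m i)) * rename (.inr ∘ Fin.castSucc) (map conj (m (σ i))) +
      rename .inr (map conj (fieldDeriv Y.1 (m i))) * rename (.inl ∘ Fin.castSucc) (m (σ i)))

/-- Tangency of a holomorphic vector field to the complexified hypersurface
`w - ω = 2iΦ(z, ζ)`. -/
def IsTangent (σ : Equiv.Perm ι) (m : ι → MvPolynomial (Fin n) ℂ)
    (Y : (Fin n → MvPolynomial (Fin (n + 1)) ℂ) × MvPolynomial (Fin (n + 1)) ℂ) : Prop :=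
  ∀ z ζ w ω, w - ω = 2 * I * eval (Sum.elim z ζ) (polarization σ m) →
    eval (polarPoint z w ζ ω) (tangencyDefect σ m Y) = 0

variable (σ : Equiv.Perm ι) (m : ι → MvPolynomial (Fin n) ℂ)
  (Y Z : (Fin n → MvPolynomial (Fin (n + 1)) ℂ) × MvPolynomial (Fin (n + 1)) ℂ)

lemma eval_polarization {τ : Type*} (m : ι → MvPolynomial τ ℂ) (z ζ : τ → ℂ) :
    eval (Sum.elim z ζ) (polarization σ m) =
      ∑ i, eval z (m i) * eval ζ (map conj (m (σ i))) := by
  simp [polarization, eval_rename, Function.comp_def]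

lemma eval_tangencyDefect (z ζ : Fin n → ℂ) (w ω : ℂ) :
    eval (polarPoint z w ζ ω) (tangencyDefect σ m Y) =
      eval (Fin.snoc z w) Y.2 -
        eval (Fin.snoc ζ ω : Fin (n + 1) → ℂ) (map conj Y.2) -
      2 * I * ∑ i,
        (eval (Fin.snoc z w) (fieldDeriv Y.1 (m i)) *
            eval ζ (map conj (m (σ i))) +
          eval (Fin.snoc ζ ω : Fin (n + 1) → ℂ) (map conj (fieldDeriv Y.1 (m i))) *
            eval z (m (σ i))) := by
  simp [tangencyDefect, eval_rename, Function.comp_def]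

variable {σ m}

lemma conj_eval_polarization (hσ : Function.Involutive σ) (z : Fin n → ℂ) :
    conj (eval (Sum.elim z fun i => conj (z i)) (polarization σ m)) =
      eval (Sum.elim z fun i => conj (z i)) (polarization σ m) := by
  simp only [eval_polarization, eval_map_conj, map_sum, map_mul, conj_conj]
  rw [← Equiv.sum_comp σ]
  simp only [hσ _, mul_comm]

lemma eval_tangencyDefect_conj (z : Fin n → ℂ) (w : ℂ) :
    eval (polarPoint z w (fun i => conj (z i)) (conj w)) (tangencyDefect σ m Y) =
      4 * I * (eval (Fin.snoc z w) Y.2 / (2 * I) -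
        ∑ i, eval (Fin.snoc z w) (fieldDeriv Y.1 (m i)) *
          conj (eval z (m (σ i)))).re := by
  rw [eval_tangencyDefect, ← conj_comp_snoc, Finset.sum_add_distrib, re_eq_add_conj]
  simp only [eval_map_conj, map_sub, map_sum, map_mul, map_div₀, conj_conj, conj_I, conj_ofNat]
  field_simp
  ring

theorem isTangent_iff (hσ : Function.Involutive σ) :
    IsTangent σ m Y ↔ ∀ (z : Fin n → ℂ) (u : ℝ),
      let w := u + I * eval (Sum.elim z fun i => conj (z i)) (polarization σ m)
      (eval (Fin.snoc z w) Y.2 / (2 * I) -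
        ∑ i, eval (Fin.snoc z w) (fieldDeriv Y.1 (m i)) *
          conj (eval z (m (σ i)))).re = 0 := by
  have hw (z : Fin n → ℂ) (u : ℝ) :
      conj (u + I * eval (Sum.elim z fun i => conj (z i)) (polarization σ m)) =
        u - I * eval (Sum.elim z fun i => conj (z i)) (polarization σ m) := by
    simp [conj_eval_polarization hσ, sub_eq_add_neg]
  constructor
  · intro hY z u w
    have h := hY z (fun i => conj (z i)) w (conj w) (by rw [hw]; ring)
    rw [eval_tangencyDefect_conj] at h
    exact_mod_cast (mul_eq_zero.mp h).resolve_left (by simp)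
  · intro hY z ζ w ω h
    refine eval_eq_zero_of_forall_hypersurface (fun z u => ?_) h
    rw [← hw, eval_tangencyDefect_conj, hY z u, ofReal_zero, mul_zero]

lemma tangencyDefect_add :
    tangencyDefect σ m (Y + Z) = tangencyDefect σ m Y + tangencyDefect σ m Z := by
  simp only [tangencyDefect, fieldDeriv, Prod.fst_add, Prod.snd_add, Pi.add_apply, add_mul,
    Finset.sum_add_distrib, map_add]
  ring

lemma tangencyDefect_smul (c : ℝ) :
    tangencyDefect σ m (c • Y) = C (c : ℂ) * tangencyDefect σ m Y := by
  have hC (p : MvPolynomial (Fin (n + 1)) ℂ) : c • p = C (c : ℂ) * p := by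
    rw [C_mul', ← algebraMap_smul ℂ c p]
    rfl
  simp only [tangencyDefect, fieldDeriv, Prod.smul_fst, Prod.smul_snd, Pi.smul_apply, hC,
    mul_assoc, ← Finset.mul_sum, map_mul, map_C, rename_C, conj_ofReal, ← mul_add]
  ring

/-- The graded component `g₁` of the model with defining function `∑ mᵢ m̄_{σ i}`, in weights
multiplied by `d`: the coefficients of `∂/∂z_j` have weight `d + 1` and that of `∂/∂w` weight
`2d`. -/
def weightOneFields (σ : Equiv.Perm ι) (m : ι → MvPolynomial (Fin n) ℂ) (d : ℕ) :
    Submodule ℝ ((Fin n → MvPolynomial (Fin (n + 1)) ℂ) × MvPolynomial (Fin (n + 1)) ℂ) where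
  carrier := {Y | IsTangent σ m Y ∧ (∀ j, IsWeightedHomogeneous (weights n d) (Y.1 j) (d + 1)) ∧
    IsWeightedHomogeneous (weights n d) Y.2 (2 * d)}
  zero_mem' := ⟨fun _ _ _ _ _ => by simp [tangencyDefect, fieldDeriv],
    fun _ => isWeightedHomogeneous_zero _ _ _, isWeightedHomogeneous_zero _ _ _⟩
  add_mem' := fun hY hZ =>
    ⟨fun z ζ w ω h => by rw [tangencyDefect_add, map_add, hY.1 z ζ w ω h, hZ.1 z ζ w ω h, add_zero],
      fun j => (hY.2.1 j).add (hZ.2.1 j), hY.2.2.add hZ.2.2⟩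
  smul_mem' := fun c Y hY =>
    ⟨fun z ζ w ω h => by rw [tangencyDefect_smul, map_mul, hY.1 z ζ w ω h, mul_zero],
      fun j => ((weightedHomogeneousSubmodule ℂ _ _).restrictScalars ℝ).smul_mem c (hY.2.1 j),
      ((weightedHomogeneousSubmodule ℂ _ _).restrictScalars ℝ).smul_mem c hY.2.2⟩

end Tangency

section VanishingField

variable {ι τ : Type*} [Fintype ι] {σ : Equiv.Perm ι} {e : ι → τ →₀ ℕ} {κ : ι → ℂ}
  {m a b : ι → MvPolynomial τ ℂ}

/-- The tangency equation at `ω = 0` of a field without `∂/∂w`-component that sends `mᵢ` to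
`bᵢ(z) + w aᵢ(z)`. -/
def IsTangentAtZero (σ : Equiv.Perm ι) (m a b : ι → MvPolynomial τ ℂ) : Prop :=
  ∀ z ζ, ∑ i, (eval z (b i) * eval ζ (map conj (m (σ i))) +
      eval ζ (map conj (b i)) * eval z (m (σ i))) +
    2 * I * eval (Sum.elim z ζ) (polarization σ m) *
      ∑ i, eval z (a i) * eval ζ (map conj (m (σ i))) = 0

/-- The polynomial `∑ xᵢ m̄_{σ i}(ζ)`. -/
def conjCombination (σ : Equiv.Perm ι) (m : ι → MvPolynomial τ ℂ) (x : ι → ℂ) : MvPolynomial τ ℂ :=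
  ∑ i, C (x i) * map conj (m (σ i))

lemma conjCombination_eq_sum_monomial (hm : ∀ i, m i = monomial (e i) (κ i)) (x : ι → ℂ) :
    conjCombination σ m x = ∑ i, monomial (e (σ i)) (x i * conj (κ (σ i))) := by
  simp [conjCombination, hm, C_mul_monomial]

lemma coeff_conjCombination (hm : ∀ i, m i = monomial (e i) (κ i)) (he : Function.Injective e)
    (x : ι → ℂ) (j : ι) : coeff (e (σ j)) (conjCombination σ m x) = x j * conj (κ (σ j)) := by
  rw [conjCombination_eq_sum_monomial hm]
  exact coeff_sum_monomial (he.comp σ.injective) _ j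

lemma coeff_conjCombination_mul (hm : ∀ i, m i = monomial (e i) (κ i))
    (he : ∀ i j k, e i + e j ≠ e k) (x y : ι → ℂ) (j : ι) :
    coeff (e (σ j)) (conjCombination σ m x * conjCombination σ m y) = 0 := by
  simp only [conjCombination_eq_sum_monomial hm]
  exact coeff_sum_monomial_mul_sum_monomial (e := e ∘ σ) (fun i j k => he _ _ _) _ _ j

lemma conjCombination_eq_zero (hm : ∀ i, m i = monomial (e i) (κ i)) (hκ : ∀ i, κ i ≠ 0)
    (he : Function.Injective e) {x : ι → ℂ} (hx : conjCombination σ m x = 0) (j : ι) : x j = 0 := by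
  have h := coeff_conjCombination (σ := σ) hm he x j
  rw [hx, coeff_zero, eq_comm, mul_eq_zero] at h
  exact h.resolve_right (by simpa using hκ (σ j))

lemma IsTangentAtZero.eq_zero (h : IsTangentAtZero σ m a b) (z : τ → ℂ) :
    conjCombination σ m (fun i => eval z (b i)) + ∑ i, C (eval z (m (σ i))) * map conj (b i) +
      C (2 * I) * (conjCombination σ m (fun i => eval z (m i)) *
        conjCombination σ m (fun i => eval z (a i))) = 0 :=
  MvPolynomial.funext fun ζ => by
    have hz := h z ζ
    rw [Finset.sum_add_distrib, eval_polarization] at hz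
    simpa [conjCombination, mul_assoc, mul_comm (eval z (m (σ _)))] using hz

lemma IsTangentAtZero.C_mul_add_sum (h : IsTangentAtZero σ m a b)
    (hm : ∀ i, m i = monomial (e i) (κ i)) (he : Function.Injective e)
    (he₂ : ∀ i j k, e i + e j ≠ e k) (j : ι) :
    C (conj (κ (σ j))) * b j + ∑ i, C (conj (coeff (e (σ j)) (b i))) * m (σ i) = 0 :=
  MvPolynomial.funext fun z => by
    have hz := congrArg (coeff (e (σ j))) (h.eq_zero z)
    rw [coeff_add, coeff_add, coeff_conjCombination hm he, coeff_C_mul,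
      coeff_conjCombination_mul hm he₂, mul_zero, add_zero] at hz
    simpa [coeff_sum, coeff_C_mul, coeff_map, mul_comm] using hz

lemma IsTangentAtZero.coeff_relation (h : IsTangentAtZero σ m a b)
    (hm : ∀ i, m i = monomial (e i) (κ i)) (he : Function.Injective e)
    (he₂ : ∀ i j k, e i + e j ≠ e k) (i j : ι) :
    conj (κ (σ j)) * coeff (e (σ i)) (b j) + conj (coeff (e (σ j)) (b i)) * κ (σ i) = 0 := by
  have hsum : coeff (e (σ i)) (∑ k, C (conj (coeff (e (σ j)) (b k))) * m (σ k)) =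
      conj (coeff (e (σ j)) (b i)) * κ (σ i) := by
    simp only [hm, C_mul_monomial]
    exact coeff_sum_monomial (he.comp σ.injective) _ i
  rw [← hsum, ← coeff_C_mul, ← coeff_add, h.C_mul_add_sum hm he he₂, coeff_zero]

-- A nonzero coefficient of `b j` at `e (σ i)` forces one of `b i` at `e (σ j)`, but the degrees
-- cannot match for both.
theorem IsTangentAtZero.right_eq_zero (h : IsTangentAtZero σ m a b)
    (hm : ∀ i, m i = monomial (e i) (κ i)) (hκ : ∀ i, κ i ≠ 0) (he : Function.Injective e)
    (he₂ : ∀ i j k, e i + e j ≠ e k) {d : ℕ} (hb : ∀ i, (b i).IsHomogeneous (d + (e i).degree))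
    (hd : ∀ i, (e (σ i)).degree < d + (e i).degree) : b = 0 := by
  have hκc (i : ι) : conj (κ i) ≠ 0 := by simpa using hκ i
  have hcoeff (i j : ι) : coeff (e (σ i)) (b j) = 0 := by
    by_contra hij
    have hji : coeff (e (σ j)) (b i) ≠ 0 := fun h₀ => by
      simpa [h₀, hκc, hij] using h.coeff_relation hm he he₂ i j
    have hdeg_ij : (e (σ i)).degree = d + (e j).degree := by
      by_contra hne
      exact hij ((hb j).coeff_eq_zero hne)
    have hdeg_ji : (e (σ j)).degree = d + (e i).degree := by
      by_contra hne
      exact hji ((hb i).coeff_eq_zero hne)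
    have := hd i
    have := hd j
    omega
  refine funext fun j => ?_
  simpa [hcoeff, hκc] using h.C_mul_add_sum hm he he₂ j

theorem IsTangentAtZero.left_eq_zero (h : IsTangentAtZero σ m a 0)
    (hm : ∀ i, m i = monomial (e i) (κ i)) (hκ : ∀ i, κ i ≠ 0) (he : Function.Injective e) :
    a = 0 := by
  refine funext fun j => (mul_eq_zero.mp ?_ : m j = 0 ∨ a j = 0).resolve_left (by simp [hm, hκ])
  refine MvPolynomial.funext fun z => ?_
  have hz := h.eq_zero z
  simp only [conjCombination, Pi.zero_apply, map_zero, zero_mul, mul_zero, Finset.sum_const_zero,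
    zero_add] at hz
  rw [map_mul, map_zero, mul_eq_zero]
  rcases mul_eq_zero.mp ((mul_eq_zero.mp hz).resolve_left (by simp)) with hz | hz
  · exact .inl (conjCombination_eq_zero hm hκ he hz j)
  · exact .inr (conjCombination_eq_zero hm hκ he hz j)

end VanishingField

section QuadraticField

variable {n : ℕ} {σ : Equiv.Perm (Fin n)} {m : Fin n → MvPolynomial (Fin n) ℂ}

/-- The field `w ∑ t_j z_j ∂/∂z_j + w² ∂/∂w`. -/
def quadraticField (t : Fin n → ℂ) :
    (Fin n → MvPolynomial (Fin (n + 1)) ℂ) × MvPolynomial (Fin (n + 1)) ℂ :=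
  (fun j => C (t j) * X j.castSucc * X (Fin.last n), X (Fin.last n) ^ 2)

lemma quadraticField_ne_zero (t : Fin n → ℂ) : quadraticField t ≠ 0 := fun h =>
  pow_ne_zero 2 (X_ne_zero (Fin.last n)) (congrArg Prod.snd h)

lemma fieldDeriv_quadraticField_monomial (t : Fin n → ℂ) (s : Fin n →₀ ℕ) (r : ℂ) :
    fieldDeriv (quadraticField t).1 (monomial s r) =
      C (∑ j, s j * t j) * X (Fin.last n) * rename Fin.castSucc (monomial s r) := by
  have heuler := congrArg (rename Fin.castSucc) (sum_mul_X_mul_pderiv_monomial t s r)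
  rw [map_mul, map_sum, rename_C] at heuler
  rw [mul_right_comm, ← heuler, Finset.sum_mul]
  refine Finset.sum_congr rfl fun j _ => ?_
  simp only [quadraticField, map_mul, rename_C, rename_X]
  ring

lemma isTangent_quadraticField (hσ : Function.Involutive σ) {t : Fin n → ℂ}
    (hm : ∀ i, fieldDeriv (quadraticField t).1 (m i) =
      X (Fin.last n) * rename Fin.castSucc (m i)) :
    IsTangent σ m (quadraticField t) := by
  intro z ζ w ω hw
  have hsymm : ∑ i, eval ζ (map conj (m i)) * eval z (m (σ i)) =
      eval (Sum.elim z ζ) (polarization σ m) := by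
    rw [eval_polarization, ← Equiv.sum_comp σ]
    simp only [hσ _, mul_comm]
  have hG : (quadraticField t).2 = X (Fin.last n) ^ 2 := rfl
  rw [eval_tangencyDefect, Finset.sum_add_distrib]
  simp only [hm, hG, map_mul, map_pow, map_X, map_rename, eval_snoc_rename, eval_X,
    Fin.snoc_last, mul_assoc, ← Finset.mul_sum]
  rw [hsymm, ← eval_polarization]
  linear_combination (w + ω) * hw

lemma quadraticField_mem_weightOneFields (hσ : Function.Involutive σ) {t : Fin n → ℂ}
    (hm : ∀ i, fieldDeriv (quadraticField t).1 (m i) =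
      X (Fin.last n) * rename Fin.castSucc (m i)) (d : ℕ) :
    quadraticField t ∈ weightOneFields σ m d := by
  refine ⟨isTangent_quadraticField hσ hm, fun j => ?_, ?_⟩
  · have h := ((isWeightedHomogeneous_C (weights n d) (t j)).mul
      (isWeightedHomogeneous_X ℂ _ j.castSucc)).mul (isWeightedHomogeneous_X ℂ _ (Fin.last n))
    simpa [quadraticField, weights, add_comm] using h
  · simpa [quadraticField, weights] using
      (isWeightedHomogeneous_X ℂ (weights n d) (Fin.last n)).pow 2

end QuadraticField

section WeightOne

variable {n d : ℕ} {σ : Equiv.Perm (Fin n)} {m : Fin n → MvPolynomial (Fin n) ℂ}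
  {Y : (Fin n → MvPolynomial (Fin (n + 1)) ℂ) × MvPolynomial (Fin (n + 1)) ℂ}

theorem exists_snd_eq_C_mul_X_sq (hd : 2 ≤ d) (hm : ∀ i, constantCoeff (m i) = 0)
    (hY : Y ∈ weightOneFields σ m d) :
    ∃ c : ℝ, Y.2 = C (c : ℂ) * X (Fin.last n) ^ 2 := by
  obtain ⟨hT, hF, hG⟩ := hY
  have hd₀ : 0 < d := by omega
  have hFc (w : ℂ) (i : Fin n) :
      eval (Fin.snoc 0 w : Fin (n + 1) → ℂ) (map conj (fieldDeriv Y.1 (m i))) = 0 := by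
    rw [fieldDeriv, map_sum, map_sum]
    refine Finset.sum_eq_zero fun j _ => ?_
    have hndvd : ¬d ∣ d + 1 := fun h => by
      have := Nat.le_of_dvd one_pos ((Nat.dvd_add_right dvd_rfl).mp h)
      omega
    rw [map_mul, map_mul, eval_snoc_zero_eq_zero hd₀ hndvd (isWeightedHomogeneous_map (hF j) conj),
      zero_mul]
  obtain ⟨c, hc⟩ := exists_eval_snoc_zero_eq_mul_pow hd₀ (isWeightedHomogeneous_map hG conj)
  have hGz (z : Fin n → ℂ) (w : ℂ) : eval (Fin.snoc z w) Y.2 = c * w ^ 2 := by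
    have h := hT z 0 w w (by simp [eval_polarization, hm])
    rw [eval_tangencyDefect, hc] at h
    simpa [hm, hFc, sub_eq_zero] using h
  have hcreal : conj c = c := by
    have h := eval_map_conj Y.2 (Fin.snoc 0 1)
    rw [conj_comp_snoc, hGz] at h
    simpa only [Pi.zero_apply, map_zero, map_one, ← Pi.zero_def, hc, one_pow, mul_one] using h.symm
  obtain ⟨c, rfl⟩ := conj_eq_iff_real.mp hcreal
  refine ⟨c, MvPolynomial.funext fun x => ?_⟩
  rw [← Fin.snoc_init_self x, hGz]
  simp

lemma IsTangent.isTangentAtZero (hY : IsTangent σ m Y) (hG : Y.2 = 0)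
    {a b : Fin n → MvPolynomial (Fin n) ℂ}
    (hF : ∀ i, fieldDeriv Y.1 (m i) =
      rename Fin.castSucc (b i) + X (Fin.last n) * rename Fin.castSucc (a i)) :
    IsTangentAtZero σ m a b := by
  intro z ζ
  have h := hY z ζ (2 * I * eval (Sum.elim z ζ) (polarization σ m)) 0 (sub_zero _)
  rw [eval_tangencyDefect] at h
  simp only [hG, hF, map_zero, sub_zero, zero_sub, map_add, map_mul, map_X, map_rename,
    eval_snoc_rename, eval_X, Fin.snoc_last, zero_mul, add_zero, neg_eq_zero, mul_eq_zero,
    I_ne_zero, OfNat.ofNat_ne_zero, false_or] at h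
  rw [← h, Finset.mul_sum, ← Finset.sum_add_distrib]
  exact Finset.sum_congr rfl fun i _ => by ring

variable {e : Fin n → Fin n →₀ ℕ} {κ : Fin n → ℂ}

theorem fst_eq_zero_of_snd_eq_zero (hd : 2 ≤ d) (hm : ∀ i, m i = monomial (e i) (κ i))
    (hκ : ∀ i, κ i ≠ 0) (hdet : (exponentMatrix ℂ e).det ≠ 0)
    (hσd : ∀ i, (e (σ i)).degree < d + (e i).degree) (hY : Y ∈ weightOneFields σ m d)
    (hG : Y.2 = 0) : Y.1 = 0 := by
  obtain ⟨hT, hF, -⟩ := hY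
  choose f l hf hfl using fun j => exists_eq_rename_add_X_last_mul hd (hF j)
  have hderiv (i : Fin n) := fieldDeriv_rename_add f l (m i)
  rw [← funext hfl] at hderiv
  have hzero := hT.isTangentAtZero hG hderiv
  have he := exponents_injective hdet
  have hb : (fun i => ∑ j, f j * pderiv j (m i)) = 0 :=
    hzero.right_eq_zero hm hκ he (exponents_add_ne hdet) (fun i => by
      rw [hm]
      exact isHomogeneous_sum_mul_pderiv_monomial hf (exponents_ne_zero hdet i) _) hσd
  rw [hb] at hzero
  have ha := hzero.left_eq_zero hm hκ he
  simp only [hm] at ha hb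
  have hf₀ := eq_zero_of_forall_sum_mul_pderiv_monomial hκ hdet (congrFun hb)
  have hl₀ := eq_zero_of_forall_sum_mul_pderiv_monomial hκ hdet (congrFun ha)
  refine funext fun j => ?_
  simp [hfl, hf₀, hl₀]

theorem rank_weightOneFields (hσ : Function.Involutive σ) (hd : 2 ≤ d)
    (hm : ∀ i, m i = monomial (e i) (κ i)) (hκ : ∀ i, κ i ≠ 0)
    (hdet : (exponentMatrix ℂ e).det ≠ 0)
    (hσd : ∀ i, (e (σ i)).degree < d + (e i).degree) :
    Module.rank ℝ (weightOneFields σ m d) = 1 := by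
  obtain ⟨t, ht⟩ := exists_sum_exponents_mul_eq_one hdet
  have hquad : quadraticField t ∈ weightOneFields σ m d :=
    quadraticField_mem_weightOneFields hσ (fun i => by
      rw [hm, fieldDeriv_quadraticField_monomial, ht, map_one, one_mul]) d
  have : Module.Free ℝ (weightOneFields σ m d) := .of_divisionRing _ _
  rw [rank_submodule_eq_one_iff]
  refine ⟨quadraticField t, hquad, quadraticField_ne_zero t, fun Y hY => ?_⟩
  have hm₀ (i : Fin n) : constantCoeff (m i) = 0 := by
    classical
    rw [hm, constantCoeff_monomial, if_neg (exponents_ne_zero hdet i)]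
  obtain ⟨c, hc⟩ := exists_snd_eq_C_mul_X_sq hd hm₀ hY
  have hG : (Y - c • quadraticField t).2 = 0 := by
    rw [Prod.snd_sub, Prod.smul_snd, hc, sub_eq_zero, quadraticField, C_mul', Complex.coe_smul]
  have hF := fst_eq_zero_of_snd_eq_zero hd hm hκ hdet hσd
    (Submodule.sub_mem _ hY (Submodule.smul_mem _ c hquad)) hG
  exact Submodule.mem_span_singleton.mpr ⟨c, (sub_eq_zero.mp (Prod.ext hF hG)).symm⟩

end WeightOne

section MonomialModel

lemma swap_zero_one_two : Equiv.swap (0 : Fin 3) 1 2 = 2 := by decide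

lemma Phi_eq_eval_polarization (P Q R : MvPolynomial (Fin 3) ℂ) (z : Fin 3 → ℂ) :
    Phi P Q R z =
      eval (Sum.elim z fun i => conj (z i)) (polarization (Equiv.swap 0 1) ![P, Q, R]) := by
  simp only [eval_polarization, eval_map_conj, Fin.sum_univ_three, Equiv.swap_apply_left,
    Equiv.swap_apply_right, swap_zero_one_two]
  rfl

lemma sum_mul_PhiD (P Q R : MvPolynomial (Fin 3) ℂ) (F : Fin 3 → MvPolynomial (Fin 4) ℂ)
    (z : Fin 3 → ℂ) (w : ℂ) :
    ∑ j, eval (Fin.snoc z w) (F j) * PhiD P Q R j z =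
      ∑ i, eval (Fin.snoc z w) (fieldDeriv F (![P, Q, R] i)) *
        conj (eval z (![P, Q, R] (Equiv.swap 0 1 i))) := by
  simp only [PhiD, eval_snoc_fieldDeriv, mul_add, Finset.sum_add_distrib, Finset.sum_mul, mul_assoc]
  rw [Fin.sum_univ_three fun i => ∑ j, _ * (eval z (pderiv j (![P, Q, R] i)) * _),
    swap_zero_one_two]
  rfl

lemma isInfCR_iff_isTangent (P Q R : MvPolynomial (Fin 3) ℂ)
    (Y : (Fin 3 → MvPolynomial (Fin 4) ℂ) × MvPolynomial (Fin 4) ℂ) :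
    IsInfCR P Q R Y.1 Y.2 ↔ IsTangent (Equiv.swap 0 1) ![P, Q, R] Y := by
  rw [isTangent_iff Y (Equiv.swap_apply_self 0 1 ·)]
  simp only [IsInfCR, sum_mul_PhiD, Phi_eq_eval_polarization]

lemma isWeightedHomogeneous_weights_iff {d N : ℕ} (hd : d ≠ 0) (p : MvPolynomial (Fin 4) ℂ) :
    IsWeightedHomogeneous (weights 3 d) p N ↔ ∀ s ∈ p.support,
      ((s 0 : ℚ) + (s 1 : ℚ) + (s 2 : ℚ)) / (d : ℚ) + (s 3 : ℚ) = N / d := by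
  refine forall_congr' fun s => ?_
  rw [mem_support_iff, weight_weights, Fin.sum_univ_three, eq_div_iff (by exact_mod_cast hd),
    add_mul, div_mul_cancel₀ _ (by exact_mod_cast hd)]
  refine imp_congr_right fun _ => ?_
  norm_cast

lemma gw_one_eq_weightOneFields (P Q R : MvPolynomial (Fin 3) ℂ) {d : ℕ} (hd : d ≠ 0) :
    gw P Q R d 1 = weightOneFields (Equiv.swap 0 1) ![P, Q, R] d := by
  ext Y
  refine and_congr (isInfCR_iff_isTangent P Q R Y) (and_congr (forall_congr' fun j => ?_) ?_)
  · rw [isWeightedHomogeneous_weights_iff hd]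
    refine forall₂_congr fun s _ => ?_
    rw [sub_eq_iff_eq_add]
    push_cast
    field_simp
  · rw [isWeightedHomogeneous_weights_iff hd]
    refine forall₂_congr fun s _ => ?_
    rw [sub_eq_iff_eq_add]
    push_cast
    field_simp
    norm_num

/-- The exponent vector of `mon c s` as a finitely supported function. -/
def exponent (s : Fin 3 → ℕ) : Fin 3 →₀ ℕ := Finsupp.equivFunOnFinite.symm s

lemma mon_eq_monomial (c : ℂ) (s : Fin 3 → ℕ) : mon c s = monomial (exponent s) c := by
  rw [monomial_eq, Finsupp.prod_fintype _ _ (fun _ => pow_zero _), Fin.prod_univ_three, mon]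
  simp [exponent, mul_assoc]

lemma degree_exponent (s : Fin 3 → ℕ) : (exponent s).degree = degE s := by
  simp [Finsupp.degree_eq_sum, Fin.sum_univ_three, exponent, degE]

lemma det_exponentMatrix (a b g : Fin 3 → ℕ) :
    (exponentMatrix ℂ ![exponent a, exponent b, exponent g]).det = edet a b g := by
  simp [exponentMatrix, edet, Matrix.det_fin_three, exponent]
  ring

end MonomialModel

theorem stmt15_general (cP cQ cR : ℂ) (hcP : cP ≠ 0) (hcQ : cQ ≠ 0) (hcR : cR ≠ 0)
    (a b g : Fin 3 → ℕ) (hdet : edet a b g ≠ 0) :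
    Module.rank ℝ ↥(Submodule.span ℝ (gw (mon cP a) (mon cQ b) (mon cR g)
        (degE a + degE b) 1)) = 1 := by
  have hdetC : (exponentMatrix ℂ ![exponent a, exponent b, exponent g]).det ≠ 0 := by
    rw [det_exponentMatrix]
    exact_mod_cast hdet
  have hpos (i : Fin 3) : 0 < (![exponent a, exponent b, exponent g] i).degree :=
    Nat.pos_of_ne_zero ((Finsupp.degree_eq_zero_iff _).not.mpr (exponents_ne_zero hdetC i))
  have ha : 0 < degE a := degree_exponent a ▸ hpos 0
  have hb : 0 < degE b := degree_exponent b ▸ hpos 1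
  rw [gw_one_eq_weightOneFields _ _ _ (by omega), Submodule.span_eq]
  refine rank_weightOneFields (e := ![exponent a, exponent b, exponent g]) (κ := ![cP, cQ, cR])
    (Equiv.swap_apply_self 0 1 ·) (by omega) ?_ ?_ hdetC ?_
  · intro i
    fin_cases i <;> exact mon_eq_monomial _ _
  · intro i
    fin_cases i <;> assumption
  · intro i
    fin_cases i <;> simp [degree_exponent, swap_zero_one_two] <;> omega

/-- For a holomorphically nondegenerate monomial model with
`deg R ≥ 2`, the graded component `g₁` has real dimension exactly `1`. -/
theorem stmt15 (cP cQ cR : ℂ) (hcP : cP ≠ 0) (hcQ : cQ ≠ 0) (hcR : cR ≠ 0)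
    (a b g : Fin 3 → ℕ)
    (hdeg : degE a + degE b = 2 * degE g)
    (hdegR : 2 ≤ degE g)
    (hdet : edet a b g ≠ 0) :
    Module.rank ℝ ↥(Submodule.span ℝ (gw (mon cP a) (mon cQ b) (mon cR g)
        (degE a + degE b) 1)) = 1 :=
  stmt15_general cP cQ cR hcP hcQ hcR a b g hdet
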